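/- If N = [[A,B],[C,D]] is a J-unitary operator on K, then D*D = 1 + B*B and DD* = 1 + CC*; consequently D is invertible with ‖D⁻¹‖ ≤ 1, the identity (D⁻¹C)(D⁻¹C)* = 1 − D⁻¹(D⁻¹)* holds, and ‖D⁻¹C‖ < 1. -/

import Mathlib

open ContinuousLinearMap

noncomputable section

variable {H : Type*} [NormedAddCommGroup H] [InnerProductSpace ℂ H] [CompleteSpace H]

/-- The Hilbert space `K = H ⊕ H` (with the `ℓ²` product norm). -/
abbrev Kspace (H : Type*) [NormedAddCommGroup H] [InnerProductSpace ℂ H] : Type _ :=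
  WithLp 2 (H × H)

/-- The block operator `[[A,B],[C,D]]` on `K`, acting by `(x,y) ↦ (Ax + By, Cx + Dy)`. -/
def blockOp (A B C D : H →L[ℂ] H) : Kspace H →L[ℂ] Kspace H :=
  (((WithLp.prodContinuousLinearEquiv 2 ℂ H H).symm : (H × H) →L[ℂ] Kspace H)) ∘L
    (((A ∘L ContinuousLinearMap.fst ℂ H H) + (B ∘L ContinuousLinearMap.snd ℂ H H)).prod
      ((C ∘L ContinuousLinearMap.fst ℂ H H) + (D ∘L ContinuousLinearMap.snd ℂ H H))) ∘L
    (((WithLp.prodContinuousLinearEquiv 2 ℂ H H) : Kspace H →L[ℂ] H × H))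

/-- The fundamental symmetry `J = [[1,0],[0,-1]]`. -/
def Jop (H : Type*) [NormedAddCommGroup H] [InnerProductSpace ℂ H] [CompleteSpace H] :
    Kspace H →L[ℂ] Kspace H :=
  blockOp 1 0 0 (-1)

theorem blockOp_apply' (A B C D : H →L[ℂ] H) (v : Kspace H) :
    blockOp A B C D v = WithLp.toLp 2 (A v.fst + B v.snd, C v.fst + D v.snd) := rfl

theorem blockOp_comp' (A B C D A' B' C' D' : H →L[ℂ] H) :
    blockOp A B C D ∘L blockOp A' B' C' D' =
      blockOp (A ∘L A' + B ∘L C') (A ∘L B' + B ∘L D') (C ∘L A' + D ∘L C') (C ∘L B' + D ∘L D') := by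
  ext v
  simp [blockOp_apply']
  constructor <;> abel

theorem blockOp_adjoint' (A B C D : H →L[ℂ] H) :
    adjoint (blockOp A B C D) = blockOp (adjoint A) (adjoint C) (adjoint B) (adjoint D) := by
  symm
  rw [ContinuousLinearMap.eq_adjoint_iff]
  intro x y
  simp [blockOp_apply', WithLp.prod_inner_apply, inner_add_left, inner_add_right,
    ContinuousLinearMap.adjoint_inner_left]
  ring

theorem blockOp_D_inj' {A B C D A' B' C' D' : H →L[ℂ] H}
    (h : blockOp A B C D = blockOp A' B' C' D') : D = D' := by
  ext y
  have := congrArg (fun T => (T (WithLp.toLp 2 (0, y))).snd) h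
  simpa [blockOp_apply'] using this

theorem Jop_sq' : Jop H * Jop H = 1 := by
  ext v
  simp [Jop, blockOp_apply']
  rfl

/-- If `N = [[A,B],[C,D]]` is `J`-unitary (i.e. invertible with `N* J N = J`), then
`D*D = 1 + B*B`, `DD* = 1 + CC*`; consequently `D` is invertible with `‖D⁻¹‖ ≤ 1`,
`(D⁻¹C)(D⁻¹C)* = 1 − D⁻¹(D⁻¹)*`, and `‖D⁻¹C‖ < 1`. -/
theorem blockD_of_J_unitary (A B C D : H →L[ℂ] H)
    (hNinv : IsUnit (blockOp A B C D))
    (hNJ : adjoint (blockOp A B C D) ∘L Jop H ∘L blockOp A B C D = Jop H) :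
    adjoint D ∘L D = 1 + adjoint B ∘L B ∧
    D ∘L adjoint D = 1 + C ∘L adjoint C ∧
    ∃ Dinv : H →L[ℂ] H, D ∘L Dinv = 1 ∧ Dinv ∘L D = 1 ∧ ‖Dinv‖ ≤ 1 ∧
      (Dinv ∘L C) ∘L adjoint (Dinv ∘L C) = 1 - Dinv ∘L adjoint Dinv ∧
      ‖Dinv ∘L C‖ < 1 := by
  have hJ2 := Jop_sq' (H := H)
  have h2 : blockOp A B C D * Jop H * adjoint (blockOp A B C D) = Jop H := by
    have h3 : adjoint (blockOp A B C D) * (Jop H * blockOp A B C D) = Jop H := hNJ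
    generalize blockOp A B C D = N at *
    obtain ⟨u, rfl⟩ := hNinv
    have h4 : (Jop H * adjoint (u : Kspace H →L[ℂ] Kspace H) * Jop H) * u = 1 := by
      rw [mul_assoc, mul_assoc, h3, hJ2]
    have h5 := (Units.mul_eq_one_iff_inv_eq (u := u)).2 (Units.mul_eq_one_iff_eq_inv.1 h4).symm
    calc _ = (u : Kspace H →L[ℂ] Kspace H) * (Jop H * adjoint (u : Kspace H →L[ℂ] Kspace H) * Jop H)
          * Jop H := by
            simp only [mul_assoc, hJ2, mul_one]
      _ = _ := by rw [h5, one_mul]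
  have h1' : adjoint D ∘L D = 1 + adjoint B ∘L B := by
    rw [Jop, blockOp_adjoint', blockOp_comp', blockOp_comp'] at hNJ
    have := blockOp_D_inj' hNJ
    ext y
    have := congrArg (fun T => T y) this
    simp at this
    simp
    rw [← sub_eq_zero] at this ⊢
    rw [← neg_eq_zero, ← this]
    abel
  have h2' : D ∘L adjoint D = 1 + C ∘L adjoint C := by
    change (blockOp A B C D ∘L Jop H) ∘L adjoint (blockOp A B C D) = Jop H at h2
    rw [Jop, blockOp_adjoint', blockOp_comp', blockOp_comp'] at h2
    have := blockOp_D_inj' h2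
    ext y
    have := congrArg (fun T => T y) this
    simp at this
    simp
    rw [← sub_eq_zero] at this ⊢
    rw [← neg_eq_zero, ← this]
    abel
  refine ⟨h1', h2', ?_⟩
  have hu1 : IsUnit (adjoint D * D) := by
    have : adjoint D * D = 1 + star B * B := h1'
    rw [this]
    exact CStarAlgebra.isUnit_of_le 1 (le_add_of_nonneg_right (star_mul_self_nonneg B))
  have hu2 : IsUnit (D * adjoint D) := by
    have : D * adjoint D = 1 + C * star C := h2'
    rw [this]
    exact CStarAlgebra.isUnit_of_le 1 (le_add_of_nonneg_right (mul_star_self_nonneg C))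
  obtain ⟨L, hL⟩ := hu1.exists_left_inv
  obtain ⟨R, hR⟩ := hu2.exists_right_inv
  rw [← mul_assoc] at hL
  rw [mul_assoc] at hR
  have hLR := left_inv_eq_right_inv hL hR
  obtain ⟨E, hDE, hED⟩ : ∃ E, D * E = 1 ∧ E * D = 1 := ⟨_, hR, by rw [← hLR]; exact hL⟩
  have hsDE : star E * star D = 1 := by rw [← star_mul, hDE, star_one]
  have hsED : star D * star E = 1 := by rw [← star_mul, hED, star_one]
  have hid : (E * C) * star (E * C) = 1 - E * star E := by
    have h : D * star D = 1 + C * star C := h2'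
    have h' : C * star C = D * star D - 1 := by rw [h]; abel
    calc _ = E * (C * star C) * star E := by simp only [star_mul, mul_assoc]
      _ = (E * D) * (star D * star E) - E * star E := by rw [h']; noncomm_ring
      _ = _ := by rw [hED, hsED, one_mul]
  have key : ∀ x : H, ‖adjoint (E * C) x‖ ^ 2 = ‖x‖ ^ 2 - ‖adjoint E x‖ ^ 2 := by
    intro x
    have h := congrArg (fun T : H →L[ℂ] H => RCLike.re (inner ℂ (T x) x)) hid
    simp only [ContinuousLinearMap.star_eq_adjoint,
      sub_apply, inner_sub_left, map_sub, one_apply_eq_self] at h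
    have e1 : ∀ T : H →L[ℂ] H, RCLike.re (inner ℂ (T (adjoint T x)) x) = ‖adjoint T x‖ ^ 2 := by
      intro T
      rw [← ContinuousLinearMap.adjoint_inner_right, inner_self_eq_norm_sq]
    have e2 := e1 (E * C)
    change RCLike.re (inner ℂ ((E * C) (adjoint (E * C) x)) x) =
      RCLike.re (inner ℂ x x) - RCLike.re (inner ℂ (E (adjoint E x)) x) at h
    rw [e1 E, e2, inner_self_eq_norm_sq] at h
    exact h
  refine ⟨E, hDE, hED, ?_, hid, ?_⟩
  · rw [← LinearIsometryEquiv.norm_map adjoint E]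
    refine ContinuousLinearMap.opNorm_le_bound _ zero_le_one fun x => ?_
    rw [one_mul]
    refine (sq_le_sq₀ (norm_nonneg _) (norm_nonneg _)).1 ?_
    nlinarith [key x, sq_nonneg ‖adjoint (E * C) x‖]
  · change ‖E * C‖ < 1
    rw [← LinearIsometryEquiv.norm_map adjoint (E * C)]
    have hM : 0 < ‖D‖ + 1 := by positivity
    refine lt_of_le_of_lt (b := √(1 - ((‖D‖ + 1) ^ 2)⁻¹)) ?_ ?_
    · refine ContinuousLinearMap.opNorm_le_bound _ (Real.sqrt_nonneg _) fun x => ?_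
      have hle : ((‖D‖ + 1) ^ 2)⁻¹ ≤ 1 := inv_le_one_of_one_le₀ (by nlinarith [norm_nonneg D])
      refine (sq_le_sq₀ (norm_nonneg _) (by positivity)).1 ?_
      rw [mul_pow, Real.sq_sqrt (by linarith), key]
      have hx : ‖x‖ ≤ (‖D‖ + 1) * ‖adjoint E x‖ := by
        have h := congrArg (fun T : H →L[ℂ] H => T x) hsED
        simp only [ContinuousLinearMap.star_eq_adjoint,
          one_apply_eq_self] at h
        change adjoint D (adjoint E x) = x at h
        calc ‖x‖ = ‖adjoint D (adjoint E x)‖ := by rw [h]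
          _ ≤ ‖adjoint D‖ * ‖adjoint E x‖ := ContinuousLinearMap.le_opNorm _ _
          _ = ‖D‖ * ‖adjoint E x‖ := by rw [LinearIsometryEquiv.norm_map]
          _ ≤ _ := by nlinarith [norm_nonneg (adjoint E x)]
      have hx2 : ((‖D‖ + 1) ^ 2)⁻¹ * ‖x‖ ^ 2 ≤ ‖adjoint E x‖ ^ 2 := by
        rw [inv_mul_le_iff₀ (by positivity), ← mul_pow]
        gcongr
      linarith
    · rw [Real.sqrt_lt' one_pos]
      have : 0 < ((‖D‖ + 1) ^ 2)⁻¹ := by positivity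
      linarith
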